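/- arXiv:1411.0446 — 2 statements merged into one kernel-verified Lean document; each statement's English description precedes it below -/
import Mathlib

section
/- Joint-MMSE form of the derivative of the multiuser mutual information: in the two-user MAC Gaussian setting with finite-support inputs, dI(snr)/dsnr = E[‖H1·P1·(x1 − x̂1(y)) + H2·P2·(x2 − x̂2(y))‖²], the minimum mean-squared error of the combined transmitted signal H1·P1·x1 + H2·P2·x2 given the output y. -/
/-! Pairs of atoms `x = (i, j)` have weights `p x` and noiseless images `c x = H₁P₁x₁ + H₂P₂x₂`, so with
`t = √snr` the output density is the Gaussian mixture `mix p c t` with centres `t • c x`, and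
`I = const - ∫ mix log mix`.

Split the mixture in front of the logarithm into its components and translate the `i`-th integral
by `t • c i`. The Gaussian weight then no longer depends on `t`, and only the logarithm is
differentiated (`hasDerivAt_log_mix`). Its derivative is a posterior average of
`-2⟨y - t c_j, c_i - c_j⟩`, hence grows at most quadratically (`abs_score_le`), which justifies
differentiating under the integral (`hasDerivAt_integral_log_mix`) without integration by parts.
After translating back and summing over `i`, both indices are independent draws from the posterior
given `y`. Exchanging them cancels the term linear in `y` and leaves `2t` times the posterior
variance of `c` (`sum_score`). Thus `dI/dt = 2t · MMSE` (`hasDerivAt_entropy`), and the factor `2t`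
disappears through `d√snr/dsnr = 1/(2√snr)`.
-/

open MeasureTheory Matrix

noncomputable section

/-- Squared Euclidean norm of a complex vector. -/
def cnormSq {n : ℕ} (v : Fin n → ℂ) : ℝ := ∑ i, Complex.normSq (v i)

/-- Data of a two-user multiple-access Gaussian channel with independent
finite-support inputs: channel matrices, precoders, and the atoms and weights
of the two input distributions. -/
structure MAC (nr nt k1 k2 : ℕ) where
  H1 : Matrix (Fin nr) (Fin nt) ℂ
  H2 : Matrix (Fin nr) (Fin nt) ℂ
  P1 : Matrix (Fin nt) (Fin nt) ℂ
  P2 : Matrix (Fin nt) (Fin nt) ℂ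
  w1 : Fin k1 → ℝ
  w2 : Fin k2 → ℝ
  a1 : Fin k1 → Fin nt → ℂ
  a2 : Fin k2 → Fin nt → ℂ
  w1_nonneg : ∀ i, 0 ≤ w1 i
  w2_nonneg : ∀ j, 0 ≤ w2 j
  w1_sum : ∑ i, w1 i = 1
  w2_sum : ∑ j, w2 j = 1

namespace MAC

variable {nr nt k1 k2 : ℕ}

/-- Gaussian conditional density `p_{y|x1,x2}(y)
  = π^{-nr} exp(-‖y - √snr·H1P1x1 - √snr·H2P2x2‖²)`. -/
def pcond (S : MAC nr nt k1 k2) (snr : ℝ) (i : Fin k1) (j : Fin k2)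
    (y : Fin nr → ℂ) : ℝ :=
  (Real.pi ^ nr)⁻¹ *
    Real.exp (-(cnormSq (y - Real.sqrt snr • ((S.H1 * S.P1).mulVec (S.a1 i))
      - Real.sqrt snr • ((S.H2 * S.P2).mulVec (S.a2 j)))))

/-- Output density `p_y(y)`, a finite Gaussian mixture. -/
def pout (S : MAC nr nt k1 k2) (snr : ℝ) (y : Fin nr → ℂ) : ℝ :=
  ∑ i, ∑ j, S.w1 i * S.w2 j * S.pcond snr i j y

/-- Mutual information `I(snr) = -nr·log(π e) - ∫ p_y log p_y`. -/
def MI (S : MAC nr nt k1 k2) (snr : ℝ) : ℝ :=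
  -((nr : ℝ) * Real.log (Real.pi * Real.exp 1)) -
    ∫ y : Fin nr → ℂ, S.pout snr y * Real.log (S.pout snr y)

/-- Conditional-mean estimate `x̂1(y)`. -/
def xhat1 (S : MAC nr nt k1 k2) (snr : ℝ) (y : Fin nr → ℂ) : Fin nt → ℂ :=
  (S.pout snr y)⁻¹ •
    ∑ i, ∑ j, (S.w1 i * S.w2 j * S.pcond snr i j y) • S.a1 i

/-- Conditional-mean estimate `x̂2(y)`. -/
def xhat2 (S : MAC nr nt k1 k2) (snr : ℝ) (y : Fin nr → ℂ) : Fin nt → ℂ :=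
  (S.pout snr y)⁻¹ •
    ∑ i, ∑ j, (S.w1 i * S.w2 j * S.pcond snr i j y) • S.a2 j

/-- Per-user MMSE matrix `E1(snr) = E[(x1 - x̂1(y))(x1 - x̂1(y))†]`, the
expectation taken over the joint law of `(x1, x2, y)`. -/
def Emat1 (S : MAC nr nt k1 k2) (snr : ℝ) : Matrix (Fin nt) (Fin nt) ℂ :=
  Matrix.of fun k l => ∑ i, ∑ j,
    ∫ y : Fin nr → ℂ, (S.w1 i * S.w2 j * S.pcond snr i j y) •
      ((S.a1 i k - S.xhat1 snr y k) * (starRingEnd ℂ) (S.a1 i l - S.xhat1 snr y l))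

/-- Per-user MMSE matrix `E2(snr) = E[(x2 - x̂2(y))(x2 - x̂2(y))†]`. -/
def Emat2 (S : MAC nr nt k1 k2) (snr : ℝ) : Matrix (Fin nt) (Fin nt) ℂ :=
  Matrix.of fun k l => ∑ i, ∑ j,
    ∫ y : Fin nr → ℂ, (S.w1 i * S.w2 j * S.pcond snr i j y) •
      ((S.a2 j k - S.xhat2 snr y k) * (starRingEnd ℂ) (S.a2 j l - S.xhat2 snr y l))

/-- Cross-correlation matrix `E[x̂1 x̂2†] = ∫ p_y(y)·x̂1(y)·x̂2(y)† dy`. -/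
def cross12 (S : MAC nr nt k1 k2) (snr : ℝ) : Matrix (Fin nt) (Fin nt) ℂ :=
  Matrix.of fun k l =>
    ∫ y : Fin nr → ℂ, (S.pout snr y) •
      (S.xhat1 snr y k * (starRingEnd ℂ) (S.xhat2 snr y l))

/-- Cross-correlation matrix `E[x̂2 x̂1†] = (E[x̂1 x̂2†])†`. -/
def cross21 (S : MAC nr nt k1 k2) (snr : ℝ) : Matrix (Fin nt) (Fin nt) ℂ :=
  (S.cross12 snr)ᴴ

end MAC

/-- The MMSE of the combined transmitted signal `H1P1x1 + H2P2x2` given `y`: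
`E[‖H1P1(x1 - x̂1(y)) + H2P2(x2 - x̂2(y))‖²]`, the expectation taken over the
joint law of `(x1, x2, y)`. -/
def MAC.jointMMSE {nr nt k1 k2 : ℕ} (S : MAC nr nt k1 k2) (snr : ℝ) : ℝ :=
  ∑ i, ∑ j, ∫ y : Fin nr → ℂ,
    (S.w1 i * S.w2 j * S.pcond snr i j y) *
      cnormSq ((S.H1 * S.P1).mulVec (S.a1 i - S.xhat1 snr y)
        + (S.H2 * S.P2).mulVec (S.a2 j - S.xhat2 snr y))

namespace MAC

variable {n : ℕ} {ι : Type*} [Fintype ι]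

/-! ### Gaussian mixtures and their posterior averages -/

/-- The real Euclidean inner product on `ℂⁿ ≅ ℝ²ⁿ`, i.e. the polarization of `cnormSq`. -/
def cinner (u v : Fin n → ℂ) : ℝ := ∑ k, ((u k).re * (v k).re + (u k).im * (v k).im)

/-- The standard circularly-symmetric complex Gaussian density on `ℂⁿ`. -/
def gauss (z : Fin n → ℂ) : ℝ := (Real.pi ^ n)⁻¹ * Real.exp (-cnormSq z)

/-- The Gaussian mixture with weights `p` and centres `t • c j`. -/
def mix (p : ι → ℝ) (c : ι → Fin n → ℂ) (t : ℝ) (y : Fin n → ℂ) : ℝ :=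
  ∑ j, p j * gauss (y - t • c j)

/-- The posterior mean of `2⟨y - t c_j, c_i - c_j⟩` over the random index `j` given the output `y`.
Along the line `t ↦ z + t • c i` it is minus the `t`-derivative of `log (mix p c t)`. -/
def score (p : ι → ℝ) (c : ι → Fin n → ℂ) (i : ι) (t : ℝ) (y : Fin n → ℂ) : ℝ :=
  (∑ j, p j * gauss (y - t • c j) * (2 * cinner (y - t • c j) (c i - c j))) / mix p c t y

/-- The posterior mean of the centre `c j` given the output `y`. -/
def cmean (p : ι → ℝ) (c : ι → Fin n → ℂ) (t : ℝ) (y : Fin n → ℂ) : Fin n → ℂ :=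
  (mix p c t y)⁻¹ • ∑ j, (p j * gauss (y - t • c j)) • c j

/-! ### Elementary estimates -/

lemma cnormSq_nonneg (v : Fin n → ℂ) : 0 ≤ cnormSq v :=
  Finset.sum_nonneg fun _ _ => Complex.normSq_nonneg _

lemma cnormSq_add_smul (z d : Fin n → ℂ) (t : ℝ) :
    cnormSq (z + t • d) = cnormSq z + 2 * t * cinner z d + t ^ 2 * cnormSq d := by
  simp only [cnormSq, cinner, Finset.mul_sum, ← Finset.sum_add_distrib]
  refine Finset.sum_congr rfl fun k _ => ?_
  simp [Complex.normSq_apply]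
  ring

lemma cinner_add_smul (z d : Fin n → ℂ) (t : ℝ) :
    cinner (z + t • d) d = cinner z d + t * cnormSq d := by
  simp only [cnormSq, cinner, Finset.mul_sum, ← Finset.sum_add_distrib]
  refine Finset.sum_congr rfl fun k _ => ?_
  simp [Complex.normSq_apply]
  ring

lemma two_abs_cinner_le (u v : Fin n → ℂ) : 2 * |cinner u v| ≤ cnormSq u + cnormSq v := by
  have h1 := cnormSq_nonneg (u + (1 : ℝ) • v)
  have h2 := cnormSq_nonneg (u + (-1 : ℝ) • v)
  rw [cnormSq_add_smul] at h1 h2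
  rcases abs_cases (cinner u v) with ⟨h, _⟩ | ⟨h, _⟩ <;> rw [h] <;> linarith

@[fun_prop]
lemma continuous_cnormSq : Continuous (cnormSq : (Fin n → ℂ) → ℝ) := by
  unfold cnormSq
  exact continuous_finsetSum _ fun k _ => Complex.continuous_normSq.comp (continuous_apply k)

@[fun_prop]
lemma continuous_gauss : Continuous (gauss : (Fin n → ℂ) → ℝ) := by
  unfold gauss; fun_prop

lemma continuous_cinner (d : Fin n → ℂ) : Continuous fun u : Fin n → ℂ => cinner u d := by
  unfold cinner; fun_prop

lemma continuous_mix (p : ι → ℝ) (c : ι → Fin n → ℂ) (t : ℝ) : Continuous (mix p c t) := by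
  unfold mix; fun_prop

lemma gauss_pos (z : Fin n → ℂ) : 0 < gauss z := by
  unfold gauss; positivity

lemma gauss_le (z : Fin n → ℂ) : gauss z ≤ (Real.pi ^ n)⁻¹ := by
  unfold gauss
  have : Real.exp (-cnormSq z) ≤ 1 := Real.exp_le_one_iff.2 (neg_nonpos.2 (cnormSq_nonneg z))
  exact mul_le_of_le_one_right (by positivity) this

lemma mix_pos {p : ι → ℝ} (hp : ∀ i, 0 ≤ p i) (hs : ∑ i, p i = 1) (c : ι → Fin n → ℂ) (t : ℝ)
    (y : Fin n → ℂ) : 0 < mix p c t y := by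
  obtain ⟨i, hi⟩ : ∃ i, 0 < p i := by
    by_contra! h
    have : ∑ i, p i ≤ 0 := Finset.sum_nonpos fun i _ => h i
    linarith
  exact Finset.sum_pos' (fun j _ => mul_nonneg (hp j) (gauss_pos _).le)
    ⟨i, Finset.mem_univ i, mul_pos hi (gauss_pos _)⟩

/-! ### Differentiation under the integral sign -/

lemma integrable_exp_neg_cnormSq {b : ℝ} (hb : 0 < b) :
    Integrable fun z : Fin n → ℂ => Real.exp (-b * cnormSq z) := by
  have h1 : Integrable fun z : ℂ => Real.exp (-b * Complex.normSq z) := by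
    have h := (GaussianFourier.integrable_cexp_neg_mul_sq_norm_add (V := ℂ) (b := b)
      (by simpa using hb) 0 0).norm
    refine h.congr (Filter.Eventually.of_forall fun z => ?_)
    simp only [Complex.norm_exp, Complex.normSq_eq_norm_sq]
    congr 1
    simp [← Complex.ofReal_pow]
  have h2 := Integrable.fintype_prod (ι := Fin n) (μ := fun _ => (volume : Measure ℂ))
    (f := fun _ z => Real.exp (-b * Complex.normSq z)) fun _ => h1
  refine h2.congr (Filter.Eventually.of_forall fun z => ?_)
  simp only [cnormSq, Finset.mul_sum, Real.exp_sum]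

/-- The Gaussian density has finite second moment. -/
lemma integrable_gauss_mul (A B : ℝ) :
    Integrable fun z : Fin n → ℂ => gauss z * (A * cnormSq z + B) := by
  have h1 : Integrable fun z : Fin n → ℂ => Real.exp (-cnormSq z) := by
    simpa using integrable_exp_neg_cnormSq (n := n) one_pos
  have h2 : Integrable fun z : Fin n → ℂ => Real.exp (-cnormSq z) * cnormSq z := by
    refine ((integrable_exp_neg_cnormSq (n := n) (b := 1 / 2) (by norm_num)).const_mul 2).mono'
      (by fun_prop) (Filter.Eventually.of_forall fun z => ?_)
    have h0 := cnormSq_nonneg z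
    rw [Real.norm_of_nonneg (by positivity)]
    -- half of the exponent absorbs the polynomial factor, by `x / 2 ≤ exp (x / 2)`
    have h3 : cnormSq z ≤ 2 * Real.exp (cnormSq z / 2) := by
      linarith [Real.add_one_le_exp (cnormSq z / 2)]
    calc Real.exp (-cnormSq z) * cnormSq z
        ≤ Real.exp (-cnormSq z) * (2 * Real.exp (cnormSq z / 2)) := by gcongr
      _ = 2 * Real.exp (-(1 / 2) * cnormSq z) := by
        rw [mul_left_comm, ← Real.exp_add]; congr 2; ring
  refine (((h2.const_mul A).add (h1.const_mul B)).const_mul (Real.pi ^ n)⁻¹).congr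
    (Filter.Eventually.of_forall fun z => ?_)
  simp only [gauss, Pi.add_apply]
  ring

lemma abs_score_le {p : ι → ℝ} (hp : ∀ i, 0 ≤ p i) (hs : ∑ i, p i = 1) (c : ι → Fin n → ℂ) (i : ι)
    {t T : ℝ} (ht : |t| ≤ T) (z : Fin n → ℂ) :
    |score p c i t (z + t • c i)| ≤
      1 * cnormSq z + (1 + 2 * T) * ∑ j, cnormSq (c i - c j) := by
  have hm := mix_pos hp hs c t (z + t • c i)
  have hT : 0 ≤ T := (abs_nonneg t).trans ht
  rw [score, abs_div, abs_of_pos hm, div_le_iff₀ hm]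
  refine (Finset.abs_sum_le_sum_abs _ _).trans ?_
  rw [mix, Finset.mul_sum]
  refine Finset.sum_le_sum fun j _ => ?_
  have hg : 0 ≤ p j * gauss (z + t • c i - t • c j) := mul_nonneg (hp j) (gauss_pos _).le
  rw [abs_mul, abs_of_nonneg hg, mul_comm]
  refine mul_le_mul_of_nonneg_right ?_ hg
  have e : z + t • c i - t • c j = z + t • (c i - c j) := by rw [smul_sub]; abel
  rw [e, cinner_add_smul]
  have h1 := two_abs_cinner_le z (c i - c j)
  have h2 : cnormSq (c i - c j) ≤ ∑ j, cnormSq (c i - c j) :=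
    Finset.single_le_sum (f := fun j => cnormSq (c i - c j))
      (fun j _ => cnormSq_nonneg _) (Finset.mem_univ j)
  have h3 : |t * cnormSq (c i - c j)| ≤ T * cnormSq (c i - c j) := by
    rw [abs_mul, abs_of_nonneg (cnormSq_nonneg _)]
    exact mul_le_mul_of_nonneg_right ht (cnormSq_nonneg _)
  have h4 := abs_add_le (cinner z (c i - c j)) (t * cnormSq (c i - c j))
  have h5 : (1 + 2 * T) * cnormSq (c i - c j) ≤ (1 + 2 * T) * ∑ j, cnormSq (c i - c j) :=
    mul_le_mul_of_nonneg_left h2 (by linarith)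
  rw [abs_mul, abs_two]
  linarith

lemma continuous_score {p : ι → ℝ} (hp : ∀ i, 0 ≤ p i) (hs : ∑ i, p i = 1) (c : ι → Fin n → ℂ)
    (i : ι) (t : ℝ) : Continuous (score p c i t) := by
  unfold score
  refine Continuous.div ?_ (continuous_mix p c t) fun y => (mix_pos hp hs c t y).ne'
  refine continuous_finsetSum _ fun j _ => ?_
  have := (continuous_cinner (c i - c j)).comp (continuous_id.sub (continuous_const (y := t • c j)))
  exact Continuous.mul (by fun_prop) (this.const_mul 2)

/-- Following the output along the moving centre `c i`, the log-density has derivative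
`-score`. -/
lemma hasDerivAt_log_mix {p : ι → ℝ} (hp : ∀ i, 0 ≤ p i) (hs : ∑ i, p i = 1)
    (c : ι → Fin n → ℂ) (i : ι) (t : ℝ) (z : Fin n → ℂ) :
    HasDerivAt (fun t => Real.log (mix p c t (z + t • c i)))
      (-score p c i t (z + t • c i)) t := by
  have e : ∀ (s : ℝ) j, z + s • c i - s • c j = z + s • (c i - c j) := by
    intro s j; rw [smul_sub]; abel
  have hN : ∀ j, HasDerivAt (fun s : ℝ => cnormSq (z + s • (c i - c j)))
      (2 * cinner (z + t • (c i - c j)) (c i - c j)) t := by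
    intro j
    simp only [cnormSq_add_smul, cinner_add_smul]
    have h := (((hasDerivAt_id t).const_mul 2).mul_const (cinner z (c i - c j))).const_add
      (cnormSq z) |>.add (((hasDerivAt_id t).pow 2).mul_const (cnormSq (c i - c j)))
    refine h.congr_deriv ?_
    simp
    ring
  have hM : HasDerivAt (fun s => mix p c s (z + s • c i))
      (∑ j, p j * (gauss (z + t • c i - t • c j) *
        -(2 * cinner (z + t • c i - t • c j) (c i - c j)))) t := by
    simp only [mix, e, gauss]
    refine HasDerivAt.fun_sum fun j _ => ?_
    refine ((((hN j).neg.exp).const_mul (Real.pi ^ n)⁻¹).const_mul (p j)).congr_deriv ?_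
    simp only [Pi.neg_apply]
    ring
  refine (hM.log (mix_pos hp hs c t _).ne').congr_deriv ?_
  rw [score, ← neg_div, ← Finset.sum_neg_distrib]
  congr 1
  exact Finset.sum_congr rfl fun j _ => by ring

lemma integrable_log_mix {p : ι → ℝ} (hp : ∀ i, 0 ≤ p i) (hs : ∑ i, p i = 1)
    (c : ι → Fin n → ℂ) (i : ι) (t : ℝ) :
    Integrable fun z => p i * gauss z * Real.log (mix p c t (z + t • c i)) := by
  rcases (hp i).eq_or_lt with h0 | hi
  · simp [← h0]
  set C := (Real.pi ^ n)⁻¹ with hC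
  have hCpos : 0 < C := by positivity
  refine ((integrable_gauss_mul 1 (|Real.log C| + |Real.log (p i)|)).const_mul (p i)).mono'
    ?_ (Filter.Eventually.of_forall fun z => ?_)
  · refine Continuous.aestronglyMeasurable ?_
    refine (by fun_prop : Continuous fun z : Fin n → ℂ => p i * gauss z).mul ?_
    exact ((continuous_mix p c t).comp (by fun_prop)).log fun z => (mix_pos hp hs c t _).ne'
  have hm := mix_pos hp hs c t (z + t • c i)
  have hg := gauss_pos z
  rw [Real.norm_eq_abs, abs_mul, abs_of_pos (by positivity), mul_assoc]
  gcongr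
  have hub : mix p c t (z + t • c i) ≤ C := by
    calc mix p c t (z + t • c i) ≤ ∑ j, p j * C :=
          Finset.sum_le_sum fun j _ => mul_le_mul_of_nonneg_left (gauss_le _) (hp j)
      _ = C := by rw [← Finset.sum_mul, hs, one_mul]
  -- the `i`-th component alone bounds the mixture from below
  have hlb : p i * (C * Real.exp (-cnormSq z)) ≤ mix p c t (z + t • c i) := by
    have h := Finset.single_le_sum (f := fun j => p j * gauss (z + t • c i - t • c j))
      (fun j _ => mul_nonneg (hp j) (gauss_pos _).le) (Finset.mem_univ i)
    simpa [gauss, mix, ← hC] using h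
  have h1 := Real.log_le_log hm hub
  have h2 := Real.log_le_log (by positivity) hlb
  rw [Real.log_mul hi.ne' (by positivity), Real.log_mul hCpos.ne' (by positivity),
    Real.log_exp] at h2
  have h0 := cnormSq_nonneg z
  rw [abs_le]
  constructor
  · linarith [neg_abs_le (Real.log C), neg_abs_le (Real.log (p i))]
  · linarith [le_abs_self (Real.log C), abs_nonneg (Real.log (p i))]

/-- Differentiation under the integral sign in the frame moving with the `i`-th centre. -/
lemma hasDerivAt_integral_log_mix {p : ι → ℝ} (hp : ∀ i, 0 ≤ p i) (hs : ∑ i, p i = 1)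
    (c : ι → Fin n → ℂ) (i : ι) (t : ℝ) :
    (Integrable fun z => p i * gauss z * -score p c i t (z + t • c i)) ∧
    HasDerivAt (fun t => ∫ z, p i * gauss z * Real.log (mix p c t (z + t • c i)))
      (∫ z, p i * gauss z * -score p c i t (z + t • c i)) t := by
  refine hasDerivAt_integral_of_dominated_loc_of_deriv_le (Metric.ball_mem_nhds t one_pos)
    (F' := fun s z => p i * gauss z * -score p c i s (z + s • c i))
    (bound := fun z => p i * (gauss z *
      (1 * cnormSq z + (1 + 2 * (|t| + 1)) * ∑ j, cnormSq (c i - c j))))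
    (Filter.Eventually.of_forall fun s => (integrable_log_mix hp hs c i s).aestronglyMeasurable)
    (integrable_log_mix hp hs c i t) ?_ ?_ ((integrable_gauss_mul _ _).const_mul _) ?_
  · refine Continuous.aestronglyMeasurable ?_
    have := (continuous_score hp hs c i t).comp
      (by fun_prop : Continuous fun z : Fin n → ℂ => z + t • c i)
    exact Continuous.mul (by fun_prop) this.neg
  · refine Filter.Eventually.of_forall fun z s hs' => ?_
    have ht : |s| ≤ |t| + 1 := by
      have h1 : |s - t| < 1 := by simpa [Real.dist_eq] using hs'
      have h2 := abs_sub_abs_le_abs_sub s t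
      linarith
    have hg := gauss_pos z
    have hpi := hp i
    rw [Real.norm_eq_abs, abs_mul, abs_neg, abs_of_nonneg (by positivity), mul_assoc]
    gcongr
    exact abs_score_le hp hs c i ht z
  · exact Filter.Eventually.of_forall fun z s _ => (hasDerivAt_log_mix hp hs c i s z).const_mul _

/-! ### Symmetrization over the posterior -/

/-- Coordinatewise form of the symmetrization identity below: for weights `r` of total mass `R`,
`∑ᵢⱼ rᵢ rⱼ (y - t xⱼ)(xᵢ - xⱼ) / R` is `t` times the weighted variance of `x`. -/
lemma sum_symm_real (r x : ι → ℝ) (y t R : ℝ) (hR : ∑ i, r i = R) (h0 : R ≠ 0) :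
    ∑ i, r i * ((∑ j, r j * ((y - t * x j) * (x i - x j))) / R) =
      t * ∑ i, r i * (x i - R⁻¹ * ∑ j, r j * x j) ^ 2 := by
  set m := ∑ j, r j * x j with hm
  set q := ∑ j, r j * x j ^ 2 with hq
  have h1 : ∀ i, ∑ j, r j * ((y - t * x j) * (x i - x j)) =
      y * x i * R - y * m - t * x i * m + t * q := by
    intro i
    rw [hm, hq, ← hR]
    simp only [Finset.mul_sum, ← Finset.sum_sub_distrib, ← Finset.sum_add_distrib]
    exact Finset.sum_congr rfl fun j _ => by ring
  have h2 : ∑ i, r i * ((y * x i * R - y * m - t * x i * m + t * q) / R) =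
      (y * R * m - y * m * R - t * m * m + t * q * R) / R := by
    have h : y * R * m - y * m * R - t * m * m + t * q * R =
        ∑ i, r i * (y * x i * R - y * m - t * x i * m + t * q) := by
      have e1 : ∑ i, r i * (y * x i * R - y * m - t * x i * m + t * q) =
          (y * R - t * m) * ∑ i, r i * x i + (t * q - y * m) * ∑ i, r i := by
        simp only [Finset.mul_sum, ← Finset.sum_add_distrib]
        exact Finset.sum_congr rfl fun j _ => by ring
      rw [e1, hR, ← hm]
      ring
    rw [h, Finset.sum_div]
    exact Finset.sum_congr rfl fun j _ => by ring
  have h3 : ∀ a, ∑ i, r i * (x i - a) ^ 2 = q - 2 * a * m + a ^ 2 * R := by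
    intro a
    rw [hm, hq, ← hR]
    simp only [Finset.mul_sum, ← Finset.sum_sub_distrib, ← Finset.sum_add_distrib]
    exact Finset.sum_congr rfl fun j _ => by ring
  simp only [h1, h2, h3]
  field_simp
  ring

/-- With `i` and `j` two independent draws from the posterior given `y`, exchanging them kills the
term linear in `y` in the mean score and leaves `2t` times the posterior variance. -/
lemma sum_score {p : ι → ℝ} (hp : ∀ i, 0 ≤ p i) (hs : ∑ i, p i = 1)
    (c : ι → Fin n → ℂ) (t : ℝ) (y : Fin n → ℂ) :
    ∑ i, p i * gauss (y - t • c i) * score p c i t y =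
      2 * t * ∑ i, p i * gauss (y - t • c i) * cnormSq (c i - cmean p c t y) := by
  have hm := (mix_pos hp hs c t y).ne'
  set r : ι → ℝ := fun i => p i * gauss (y - t • c i) with hr
  set R := mix p c t y with hR
  have hsum : ∑ i, r i = R := rfl
  have hre : ∀ k, (cmean p c t y k).re = R⁻¹ * ∑ j, r j * (c j k).re := by
    intro k; simp [cmean, hr, hR]
  have him : ∀ k, (cmean p c t y k).im = R⁻¹ * ∑ j, r j * (c j k).im := by
    intro k; simp [cmean, hr, hR]
  have hl : ∀ i, score p c i t y = ∑ k, 2 *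
      ((∑ j, r j * (((y k).re - t * (c j k).re) * ((c i k).re - (c j k).re))) / R +
       (∑ j, r j * (((y k).im - t * (c j k).im) * ((c i k).im - (c j k).im))) / R) := by
    intro i
    simp only [score, cinner, ← hR, Finset.mul_sum, ← add_div, ← Finset.sum_add_distrib]
    rw [Finset.sum_comm, Finset.sum_div]
    refine Finset.sum_congr rfl fun k _ => ?_
    rw [← mul_div_assoc, Finset.mul_sum]
    congr 1
    refine Finset.sum_congr rfl fun j _ => ?_
    simp [hr]
    ring
  calc ∑ i, r i * score p c i t y
      = ∑ k, 2 * (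
        (∑ i, r i * ((∑ j, r j * (((y k).re - t * (c j k).re) *
          ((c i k).re - (c j k).re))) / R)) +
        (∑ i, r i * ((∑ j, r j * (((y k).im - t * (c j k).im) *
          ((c i k).im - (c j k).im))) / R))) := by
        simp only [hl]
        rw [Finset.sum_congr rfl fun i _ => Finset.mul_sum _ _ _, Finset.sum_comm]
        refine Finset.sum_congr rfl fun k _ => ?_
        rw [← Finset.sum_add_distrib, Finset.mul_sum]
        exact Finset.sum_congr rfl fun i _ => by ring
    _ = ∑ k, 2 * (t * ∑ i, r i * ((c i k).re - (cmean p c t y k).re) ^ 2 +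
          t * ∑ i, r i * ((c i k).im - (cmean p c t y k).im) ^ 2) := by
        refine Finset.sum_congr rfl fun k _ => ?_
        rw [sum_symm_real r _ _ t R hsum hm, sum_symm_real r _ _ t R hsum hm, hre, him]
    _ = 2 * t * ∑ i, r i * cnormSq (c i - cmean p c t y) := by
        simp only [cnormSq, Finset.mul_sum, ← Finset.sum_add_distrib]
        rw [Finset.sum_comm]
        refine Finset.sum_congr rfl fun i _ => Finset.sum_congr rfl fun k _ => ?_
        simp [Complex.normSq_apply]
        ring

lemma continuous_cmean {p : ι → ℝ} (hp : ∀ i, 0 ≤ p i) (hs : ∑ i, p i = 1)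
    (c : ι → Fin n → ℂ) (t : ℝ) : Continuous (cmean p c t) := by
  unfold cmean
  exact ((continuous_mix p c t).inv₀ fun y => (mix_pos hp hs c t y).ne').smul (by fun_prop)

/-! ### Derivative of the mixture entropy -/

/-- The weighted estimation error is dominated by `(2t)⁻¹` times the function on the left
of `sum_score`. -/
lemma integrable_err {p : ι → ℝ} (hp : ∀ i, 0 ≤ p i) (hs : ∑ i, p i = 1)
    (c : ι → Fin n → ℂ) {t : ℝ} (ht : 0 < t)
    (hS : Integrable fun y => ∑ i, p i * gauss (y - t • c i) * score p c i t y) (i : ι) :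
    Integrable fun y => p i * gauss (y - t • c i) * cnormSq (c i - cmean p c t y) := by
  refine (hS.const_mul (2 * t)⁻¹).mono' ?_ (Filter.Eventually.of_forall fun y => ?_)
  · refine Continuous.aestronglyMeasurable ?_
    have := continuous_cnormSq.comp (continuous_const (y := c i) |>.sub (continuous_cmean hp hs c t))
    exact Continuous.mul (by fun_prop) this
  have hn : ∀ j, 0 ≤ p j * gauss (y - t • c j) * cnormSq (c j - cmean p c t y) := fun j =>
    mul_nonneg (mul_nonneg (hp j) (gauss_pos _).le) (cnormSq_nonneg _)
  rw [Real.norm_of_nonneg (hn i), sum_score hp hs, inv_mul_cancel_left₀ (by positivity)]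
  exact Finset.single_le_sum (f := fun j => p j * gauss (y - t • c j) *
    cnormSq (c j - cmean p c t y)) (fun j _ => hn j) (Finset.mem_univ i)

/-- The derivative of the negative differential entropy of a Gaussian mixture in the amplitude `t`. -/
lemma hasDerivAt_entropy {p : ι → ℝ} (hp : ∀ i, 0 ≤ p i) (hs : ∑ i, p i = 1)
    (c : ι → Fin n → ℂ) {t : ℝ} (ht : 0 < t) :
    HasDerivAt (fun t => ∫ y, mix p c t y * Real.log (mix p c t y))
      (-(2 * t * ∑ i, ∫ y, p i * gauss (y - t • c i) * cnormSq (c i - cmean p c t y))) t := by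
  have hsplit : (fun t => ∫ y, mix p c t y * Real.log (mix p c t y)) =
      fun t => ∑ i, ∫ z, p i * gauss z * Real.log (mix p c t (z + t • c i)) := by
    funext s
    have hI : ∀ i, Integrable fun y =>
        p i * gauss (y - s • c i) * Real.log (mix p c s y) := by
      intro i
      simpa using (integrable_log_mix hp hs c i s).comp_sub_right (s • c i)
    have hT : ∀ i, ∫ z, p i * gauss z * Real.log (mix p c s (z + s • c i)) =
        ∫ y, p i * gauss (y - s • c i) * Real.log (mix p c s y) := by
      intro i
      rw [← integral_sub_right_eq_self _ (s • c i)]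
      simp
    simp only [hT]
    rw [← integral_finsetSum _ fun i _ => hI i]
    refine integral_congr_ae (Filter.Eventually.of_forall fun y => ?_)
    simp only [← Finset.sum_mul]
    rfl
  rw [hsplit]
  refine (HasDerivAt.fun_sum fun i _ =>
    (hasDerivAt_integral_log_mix hp hs c i t).2).congr_deriv ?_
  have hI : ∀ i, Integrable fun y => p i * gauss (y - t • c i) * score p c i t y := by
    intro i
    simpa using ((hasDerivAt_integral_log_mix hp hs c i t).1.comp_sub_right (t • c i)).neg
  have hT : ∀ i, ∫ z, p i * gauss z * -score p c i t (z + t • c i) =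
      -∫ y, p i * gauss (y - t • c i) * score p c i t y := by
    intro i
    rw [← integral_sub_right_eq_self _ (t • c i), ← integral_neg]
    simp
  simp only [hT]
  rw [Finset.sum_neg_distrib, ← integral_finsetSum _ fun i _ => hI i,
    ← integral_finsetSum _ fun i _ =>
      integrable_err hp hs c ht (integrable_finsetSum _ fun i _ => hI i) i,
    ← integral_const_mul]
  simp only [sum_score hp hs]

/-! ### The channel as a Gaussian mixture -/

/-- The product weights on the pairs of atoms. -/
def wt (S : MAC nr nt k1 k2) (x : Fin k1 × Fin k2) : ℝ := S.w1 x.1 * S.w2 x.2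

/-- The noiseless received point `H₁P₁x₁ + H₂P₂x₂` of a pair of atoms. -/
def pt (S : MAC nr nt k1 k2) (x : Fin k1 × Fin k2) : Fin nr → ℂ :=
  (S.H1 * S.P1).mulVec (S.a1 x.1) + (S.H2 * S.P2).mulVec (S.a2 x.2)

lemma pcond_eq (S : MAC nr nt k1 k2) (snr : ℝ) (i : Fin k1) (j : Fin k2) (y : Fin nr → ℂ) :
    S.pcond snr i j y = gauss (y - Real.sqrt snr • S.pt (i, j)) := by
  simp only [pcond, gauss, pt, smul_add, sub_sub]

lemma pout_eq (S : MAC nr nt k1 k2) (snr : ℝ) (y : Fin nr → ℂ) :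
    S.pout snr y = mix S.wt S.pt (Real.sqrt snr) y := by
  simp only [pout, mix, Fintype.sum_prod_type, pcond_eq, wt]

lemma cmean_eq (S : MAC nr nt k1 k2) (snr : ℝ) (y : Fin nr → ℂ) :
    cmean S.wt S.pt (Real.sqrt snr) y =
      (S.H1 * S.P1).mulVec (S.xhat1 snr y) + (S.H2 * S.P2).mulVec (S.xhat2 snr y) := by
  simp only [cmean, xhat1, xhat2, pout_eq, Matrix.mulVec_smul, Matrix.mulVec_sum, ← smul_add,
    ← Finset.sum_add_distrib, Fintype.sum_prod_type, pcond_eq, wt]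
  rfl

lemma wt_nonneg (S : MAC nr nt k1 k2) (x) : 0 ≤ S.wt x :=
  mul_nonneg (S.w1_nonneg _) (S.w2_nonneg _)

lemma wt_sum (S : MAC nr nt k1 k2) : ∑ x, S.wt x = 1 := by
  simp only [Fintype.sum_prod_type, wt, ← Finset.mul_sum, S.w2_sum, mul_one, S.w1_sum]

lemma jointMMSE_eq (S : MAC nr nt k1 k2) (snr : ℝ) :
    S.jointMMSE snr = ∑ x, ∫ y, S.wt x * gauss (y - Real.sqrt snr • S.pt x) *
      cnormSq (S.pt x - cmean S.wt S.pt (Real.sqrt snr) y) := by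
  simp only [jointMMSE, Fintype.sum_prod_type, pcond_eq, cmean_eq, wt, Matrix.mulVec_sub]
  refine Finset.sum_congr rfl fun i _ => Finset.sum_congr rfl fun j _ => ?_
  simp only [pt, add_sub_add_comm]

end MAC

/-- **Joint-MMSE form of the derivative of the multiuser mutual information.**
For the two-user MAC Gaussian channel with finite-support inputs,
`dI(snr)/dsnr = E[‖H1P1(x1 - x̂1(y)) + H2P2(x2 - x̂2(y))‖²]`. -/
theorem MAC.deriv_MI_eq_jointMMSE (nr nt k1 k2 : ℕ) (S : MAC nr nt k1 k2) :
    ∀ snr : ℝ, 0 < snr →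
      DifferentiableAt ℝ S.MI snr ∧ deriv S.MI snr = S.jointMMSE snr := by
  intro snr h
  have ht := Real.sqrt_pos.2 h
  have hd := MAC.hasDerivAt_entropy S.wt_nonneg S.wt_sum S.pt ht
  have hMI : HasDerivAt S.MI (S.jointMMSE snr) snr := by
    have h1 := ((hd.comp snr (Real.hasDerivAt_sqrt h.ne')).const_sub
      (-((nr : ℝ) * Real.log (Real.pi * Real.exp 1))))
    have h2 : S.MI = fun s => -((nr : ℝ) * Real.log (Real.pi * Real.exp 1)) -
        ((fun t => ∫ y, MAC.mix S.wt S.pt t y * Real.log (MAC.mix S.wt S.pt t y)) ∘ Real.sqrt) s := by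
      funext s
      simp only [MI, pout_eq, Function.comp_apply]
    rw [h2]
    refine h1.congr_deriv ?_
    rw [← jointMMSE_eq]
    field_simp
  exact ⟨hMI.differentiableAt, hMI.deriv⟩
end
end

section
/- Single-user vector I-MMSE (recovered from Theorem 1 when the interference term vanishes): for the single-user channel y = √snr·H·P·x + n with a finite-support input x, the mutual information I(snr) is differentiable on (0,∞) and dI(snr)/dsnr = Tr(H·P·E·(H·P)†), where E = E[(x − x̂(y))(x − x̂(y))†] is the MMSE matrix of x given y. -/
/-!
The I-MMSE relation for a finite-support input, by differentiating in `t = √snr`.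

Write `vᵢ = H P aᵢ` and let `p_t` be the output density, a Gaussian mixture with centres `t vᵢ`.
Conditioning on the atom and translating by `t vᵢ` gives
`∫ p_t log p_t = ∑ᵢ wᵢ ∫ g(x) log p_t(x + t vᵢ) dx` with a fixed Gaussian weight `g`
(`SU.integral_mix_log`), so only the logarithm depends on `t`. Its `t`-derivative is `-2` times a
posterior average of `Re ⟨x + t (vᵢ - vⱼ), vᵢ - vⱼ⟩` (`SU.hasDerivAt_log_mix`), hence of at most
quadratic growth in `x`, locally uniformly in `t` (`SU.abs_score_le`), and one may differentiate
under the integral (`SU.hasDerivAt_integral_log_mix`).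

Translating back, the derivative of `∫ p_t log p_t` is `-2` times the integral of
`∑ᵢⱼ qᵢ qⱼ Re ⟨y - t vⱼ, vᵢ - vⱼ⟩ / p_t(y)` with `qᵢ = wᵢ g(y - t vᵢ)`. The part in `y` is
antisymmetric in `(i, j)` and vanishes, and the rest is `t` times the weighted conditional variance
of `H P x` given `y` (`SU.weighted_variance`); no integration by parts is needed. Thus
`dI/dt = 2 t E‖H P (x - x̂)‖²`, and the chain rule with `dt/dsnr = 1 / (2 t)` gives
`dI/dsnr = E‖H P (x - x̂)‖²`, which is `Tr(H P E (H P)†)` (`SU.trace_eq_integral_condVar`).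
-/

open MeasureTheory Matrix

noncomputable section

/-- Data of a single-user Gaussian channel `y = √snr·H·P·x + n` with a
finite-support input: channel matrix, precoder, and the atoms and weights of
the input distribution. -/
structure SU (nr nt k : ℕ) where
  H : Matrix (Fin nr) (Fin nt) ℂ
  P : Matrix (Fin nt) (Fin nt) ℂ
  w : Fin k → ℝ
  a : Fin k → Fin nt → ℂ
  w_nonneg : ∀ i, 0 ≤ w i
  w_sum : ∑ i, w i = 1

namespace SU

variable {nr nt k : ℕ}

/-- Gaussian conditional density `p_{y|x}(y) = π^{-nr}·exp(-‖y - √snr·HPx‖²)`. -/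
def pcond (S : SU nr nt k) (snr : ℝ) (i : Fin k) (y : Fin nr → ℂ) : ℝ :=
  (Real.pi ^ nr)⁻¹ *
    Real.exp (-(cnormSq (y - Real.sqrt snr • ((S.H * S.P).mulVec (S.a i)))))

/-- Output density `p_y(y)`, a finite Gaussian mixture. -/
def pout (S : SU nr nt k) (snr : ℝ) (y : Fin nr → ℂ) : ℝ :=
  ∑ i, S.w i * S.pcond snr i y

/-- Mutual information `I(snr) = -nr·log(π e) - ∫ p_y log p_y`. -/
def MI (S : SU nr nt k) (snr : ℝ) : ℝ :=
  -((nr : ℝ) * Real.log (Real.pi * Real.exp 1)) -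
    ∫ y : Fin nr → ℂ, S.pout snr y * Real.log (S.pout snr y)

/-- Conditional-mean estimate `x̂(y) = Σ_x x·p_{y|x}(y)·p_x(x) / p_y(y)`. -/
def xhat (S : SU nr nt k) (snr : ℝ) (y : Fin nr → ℂ) : Fin nt → ℂ :=
  (S.pout snr y)⁻¹ • ∑ i, (S.w i * S.pcond snr i y) • S.a i

/-- MMSE matrix `E(snr) = E[(x - x̂(y))(x - x̂(y))†]`, the expectation over the
joint law of `(x, y)`. -/
def Emat (S : SU nr nt k) (snr : ℝ) : Matrix (Fin nt) (Fin nt) ℂ :=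
  Matrix.of fun p q => ∑ i,
    ∫ y : Fin nr → ℂ, (S.w i * S.pcond snr i y) •
      ((S.a i p - S.xhat snr y p) * (starRingEnd ℂ) (S.a i q - S.xhat snr y q))

end SU

namespace SU

open Filter

/-! ### Squared norm and real inner product -/

/-- The real inner product `Re ⟨x, y⟩` on `ℂⁿ ≅ ℝ²ⁿ`, whose associated squared norm is
`cnormSq`. -/
def cdot {n : ℕ} (x y : Fin n → ℂ) : ℝ :=
  ∑ r, ((x r).re * (y r).re + (x r).im * (y r).im)

lemma cnormSq_nonneg {n : ℕ} (x : Fin n → ℂ) : 0 ≤ cnormSq x :=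
  Finset.sum_nonneg fun _ _ => Complex.normSq_nonneg _

lemma cnormSq_add_smul {n : ℕ} (x d : Fin n → ℂ) (t : ℝ) :
    cnormSq (x + t • d) = cnormSq x + 2 * t * cdot x d + t ^ 2 * cnormSq d := by
  simp only [cnormSq, cdot, Finset.mul_sum, ← Finset.sum_add_distrib]
  refine Finset.sum_congr rfl fun r _ => ?_
  simp [Complex.normSq_apply]
  ring

lemma cdot_add_smul_self {n : ℕ} (x d : Fin n → ℂ) (t : ℝ) :
    cdot (x + t • d) d = cdot x d + t * cnormSq d := by
  simp only [cnormSq, cdot, Finset.mul_sum, ← Finset.sum_add_distrib]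
  refine Finset.sum_congr rfl fun r _ => ?_
  simp [Complex.normSq_apply]
  ring

lemma abs_two_cdot_le {n : ℕ} (x y : Fin n → ℂ) :
    |2 * cdot x y| ≤ cnormSq x + cnormSq y := by
  simp only [cnormSq, cdot, Finset.mul_sum, ← Finset.sum_add_distrib]
  refine (Finset.abs_sum_le_sum_abs _ _).trans (Finset.sum_le_sum fun r _ => ?_)
  rw [Complex.normSq_apply, Complex.normSq_apply, abs_le]
  constructor <;>
    nlinarith [sq_nonneg ((x r).re - (y r).re), sq_nonneg ((x r).im - (y r).im),
      sq_nonneg ((x r).re + (y r).re), sq_nonneg ((x r).im + (y r).im)]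

lemma cnormSq_add_smul_le {n : ℕ} (x d : Fin n → ℂ) (t : ℝ) :
    cnormSq (x + t • d) ≤ 2 * cnormSq x + 2 * t ^ 2 * cnormSq d := by
  simp only [cnormSq, Finset.mul_sum, ← Finset.sum_add_distrib]
  refine Finset.sum_le_sum fun r _ => ?_
  simp only [Complex.normSq_apply, Pi.add_apply, Pi.smul_apply, Complex.add_re, Complex.add_im,
    Complex.real_smul, Complex.re_ofReal_mul, Complex.im_ofReal_mul]
  nlinarith [sq_nonneg ((x r).re - t * (d r).re), sq_nonneg ((x r).im - t * (d r).im)]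

@[fun_prop]
lemma continuous_cnormSq {n : ℕ} : Continuous (cnormSq : (Fin n → ℂ) → ℝ) :=
  continuous_finsetSum _ fun i _ => Complex.continuous_normSq.comp (continuous_apply i)

lemma continuous_cdot_left {n : ℕ} (d : Fin n → ℂ) : Continuous fun x => cdot x d := by
  unfold cdot
  fun_prop

/-- One real coordinate of `weighted_variance`. Writing `p`, `m`, `s` for the weighted moments of
order 0, 1, 2, both sides equal `t * (s - m ^ 2 / p)`. -/
lemma weighted_variance_real {k : ℕ} (q V : Fin k → ℝ) (Y t : ℝ) (hq : ∑ i, q i ≠ 0) :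
    ∑ i, ∑ j, q i * (q j * ((Y - t * V j) * (V i - V j)) / ∑ l, q l) =
      t * ∑ i, q i * (V i - (∑ l, q l)⁻¹ * ∑ j, q j * V j) ^ 2 := by
  set p := ∑ l, q l with hp
  set m := ∑ j, q j * V j with hm
  set s := ∑ j, q j * V j ^ 2 with hs
  have h1 : ∑ i, ∑ j, q i * (q j * ((Y - t * V j) * (V i - V j)) / p) =
      (Y * (m * p) - Y * (p * m) - t * (m * m) + t * (p * s)) / p := by
    rw [hm, hs, hp]
    simp only [Finset.sum_mul_sum]
    simp only [Finset.mul_sum, ← Finset.sum_sub_distrib, ← Finset.sum_add_distrib, Finset.sum_div]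
    refine Finset.sum_congr rfl fun i _ => Finset.sum_congr rfl fun j _ => ?_
    ring
  have h2 : ∑ i, q i * (V i - p⁻¹ * m) ^ 2 = s - 2 * (p⁻¹ * m) * m + (p⁻¹ * m) ^ 2 * p := by
    generalize p⁻¹ * m = c
    rw [hm, hs, hp]
    simp only [Finset.mul_sum, ← Finset.sum_sub_distrib, ← Finset.sum_add_distrib]
    refine Finset.sum_congr rfl fun i _ => ?_
    ring
  rw [h1, h2]
  field_simp
  ring

/-- The algebraic core of the I-MMSE relation. On the left the terms in `y` are antisymmetric in
`(i, j)` and cancel; what is left is `t` times the total weight times the variance of `v` under the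
normalized weights. -/
lemma weighted_variance {n k : ℕ} (q : Fin k → ℝ) (v : Fin k → Fin n → ℂ) (y : Fin n → ℂ)
    (t : ℝ) (hq : ∑ i, q i ≠ 0) :
    ∑ i, q i * ∑ j, q j * cdot (y - t • v j) (v i - v j) / ∑ l, q l =
      t * ∑ i, q i * cnormSq (v i - (∑ l, q l)⁻¹ • ∑ j, q j • v j) := by
  have hL : ∑ i, q i * ∑ j, q j * cdot (y - t • v j) (v i - v j) / ∑ l, q l =
      ∑ r, ((∑ i, ∑ j, q i * (q j * (((y r).re - t * (v j r).re) *
          ((v i r).re - (v j r).re)) / ∑ l, q l)) +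
        (∑ i, ∑ j, q i * (q j * (((y r).im - t * (v j r).im) *
          ((v i r).im - (v j r).im)) / ∑ l, q l))) := by
    simp only [← Finset.sum_add_distrib]
    rw [Finset.sum_comm]
    refine Finset.sum_congr rfl fun i _ => ?_
    rw [Finset.sum_comm, Finset.mul_sum]
    refine Finset.sum_congr rfl fun j _ => ?_
    rw [cdot, Finset.mul_sum, Finset.sum_div, Finset.mul_sum]
    refine Finset.sum_congr rfl fun r _ => ?_
    simp
    ring
  rw [hL]
  simp only [weighted_variance_real q _ _ t hq]
  simp only [cnormSq, Finset.mul_sum, ← Finset.sum_add_distrib]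
  rw [Finset.sum_comm]
  refine Finset.sum_congr rfl fun i _ => Finset.sum_congr rfl fun r _ => ?_
  simp only [Complex.normSq_apply, Pi.sub_apply, Pi.smul_apply, Finset.sum_apply, Complex.sub_re,
    Complex.sub_im, Complex.real_smul, Complex.re_ofReal_mul, Complex.im_ofReal_mul,
    Complex.re_sum, Complex.im_sum, Finset.mul_sum]
  ring

/-! ### Gaussian density and integrability -/

/-- The density of the standard circularly-symmetric complex Gaussian on `ℂⁿ`. -/
def gauss {n : ℕ} (x : Fin n → ℂ) : ℝ := (Real.pi ^ n)⁻¹ * Real.exp (-cnormSq x)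

lemma gauss_pos {n : ℕ} (x : Fin n → ℂ) : 0 < gauss x := by
  unfold gauss
  positivity

@[fun_prop]
lemma continuous_gauss {n : ℕ} : Continuous (gauss : (Fin n → ℂ) → ℝ) := by
  unfold gauss
  fun_prop

lemma integrable_exp_neg_half_cnormSq (n : ℕ) :
    Integrable fun x : Fin n → ℂ => Real.exp (-(1 / 2 * cnormSq x)) := by
  have h : Integrable fun z : ℂ => Real.exp (-(1 / 2 * Complex.normSq z)) := by
    have := (GaussianFourier.integrable_cexp_neg_mul_sq_norm_add (V := ℂ) (b := 1 / 2)
      (by norm_num) 0 0).re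
    refine this.congr (ae_of_all _ fun z => ?_)
    have : (-(1 / 2 : ℂ) * (‖z‖ : ℂ) ^ 2 + 0 * ((inner ℝ 0 z : ℝ) : ℂ)) =
        ((-(1 / 2 * Complex.normSq z) : ℝ) : ℂ) := by
      rw [Complex.normSq_eq_norm_sq]
      push_cast
      ring
    simp only [this]
    simp [← Complex.ofReal_exp, -Complex.ofReal_neg, -Complex.ofReal_mul]
  have := Integrable.fintype_prod (ι := Fin n) (f := fun _ => fun z : ℂ =>
    Real.exp (-(1 / 2 * Complex.normSq z))) (μ := fun _ => volume) fun _ => h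
  refine this.congr (ae_of_all _ fun x => ?_)
  simp only [cnormSq, ← Real.exp_sum, Finset.mul_sum, Finset.sum_neg_distrib]

/-- A function of at most quadratic growth is integrable against the Gaussian density: the
quadratic factor is absorbed by half of the exponent. -/
lemma integrable_gauss_mul {n : ℕ} {f : (Fin n → ℂ) → ℝ} (hf : Continuous f) (A B : ℝ)
    (hA : 0 ≤ A) (hB : 0 ≤ B)
    (h : ∀ x, |f x| ≤ A * cnormSq x + B) : Integrable fun x => gauss x * f x := by
  refine ((integrable_exp_neg_half_cnormSq n).const_mul ((Real.pi ^ n)⁻¹ * (2 * A + B))).mono'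
    (by fun_prop) (ae_of_all _ fun x => ?_)
  have h0 := cnormSq_nonneg x
  have h1 : 1 / 2 * cnormSq x ≤ Real.exp (1 / 2 * cnormSq x) := by
    linarith [Real.add_one_le_exp (1 / 2 * cnormSq x)]
  have h2 : 1 ≤ Real.exp (1 / 2 * cnormSq x) := Real.one_le_exp (by positivity)
  have h3 : |f x| ≤ (2 * A + B) * Real.exp (1 / 2 * cnormSq x) := by
    refine (h x).trans ?_
    nlinarith
  have h4 : Real.exp (-(1 / 2 * cnormSq x)) =
      Real.exp (-cnormSq x) * Real.exp (1 / 2 * cnormSq x) := by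
    rw [← Real.exp_add]; congr 1; ring
  rw [Real.norm_eq_abs, abs_mul, abs_of_pos (gauss_pos x), h4, gauss]
  calc _ ≤ (Real.pi ^ n)⁻¹ * Real.exp (-cnormSq x) *
        ((2 * A + B) * Real.exp (1 / 2 * cnormSq x)) := by gcongr
    _ = _ := by ring

lemma integrable_gauss {n : ℕ} : Integrable (gauss : (Fin n → ℂ) → ℝ) := by
  simpa using integrable_gauss_mul (n := n) (f := fun _ => 1) continuous_const 0 1 le_rfl
    zero_le_one (by simp)


/-! ### Entropy integral of a Gaussian mixture -/

section Mixture

variable {n k : ℕ}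

/-- The Gaussian mixture on `ℂⁿ` with weights `w` and centres `t • v i`; the parameter `t` plays
the role of `√snr`. -/
def mix (w : Fin k → ℝ) (v : Fin k → Fin n → ℂ) (t : ℝ) (y : Fin n → ℂ) : ℝ :=
  ∑ i, w i * gauss (y - t • v i)

lemma mix_pos {w : Fin k → ℝ} (hw : ∀ i, 0 ≤ w i) (hw1 : ∑ i, w i = 1)
    (v : Fin k → Fin n → ℂ) (t : ℝ) (y : Fin n → ℂ) : 0 < mix w v t y := by
  obtain ⟨i, hi⟩ : ∃ i, 0 < w i := by
    by_contra! h
    have := Finset.sum_nonpos fun i (_ : i ∈ Finset.univ) => h i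
    linarith
  exact Finset.sum_pos' (fun j _ => mul_nonneg (hw j) (gauss_pos _).le)
    ⟨i, Finset.mem_univ _, mul_pos hi (gauss_pos _)⟩

@[fun_prop]
lemma continuous_mix (w : Fin k → ℝ) (v : Fin k → Fin n → ℂ) (t : ℝ) :
    Continuous (mix w v t) := by
  unfold mix
  fun_prop

lemma shift_eq (v : Fin k → Fin n → ℂ) (t : ℝ) (x : Fin n → ℂ) (i j : Fin k) :
    x + t • v i - t • v j = x + t • (v i - v j) := by
  rw [smul_sub]; abel

/-- The sum of all squared distances between centres, a crude uniform bound for each of them. -/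
def diam (v : Fin k → Fin n → ℂ) : ℝ := ∑ i, ∑ j, cnormSq (v i - v j)

lemma diam_nonneg (v : Fin k → Fin n → ℂ) : 0 ≤ diam v :=
  Finset.sum_nonneg fun _ _ => Finset.sum_nonneg fun _ _ => cnormSq_nonneg _

lemma cnormSq_sub_le_diam (v : Fin k → Fin n → ℂ) (i j : Fin k) :
    cnormSq (v i - v j) ≤ diam v :=
  (Finset.single_le_sum (f := fun j => cnormSq (v i - v j)) (fun _ _ => cnormSq_nonneg _)
    (Finset.mem_univ j)).trans
    (Finset.single_le_sum (f := fun i => ∑ j, cnormSq (v i - v j))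
      (fun _ _ => Finset.sum_nonneg fun _ _ => cnormSq_nonneg _) (Finset.mem_univ i))

/-- The mixture is at most `π⁻ⁿ`, and bounding every exponent uniformly in `j` bounds it below by
`π⁻ⁿ` times the exponential of minus a quadratic, because the weights sum to one. -/
lemma abs_log_mix_le {w : Fin k → ℝ} (hw : ∀ i, 0 ≤ w i) (hw1 : ∑ i, w i = 1)
    (v : Fin k → Fin n → ℂ) (t : ℝ) (i : Fin k) (x : Fin n → ℂ) :
    |Real.log (mix w v t (x + t • v i))| ≤
      2 * cnormSq x + (2 * t ^ 2 * diam v + |Real.log ((Real.pi ^ n)⁻¹)|) := by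
  have hpi : 0 < (Real.pi ^ n)⁻¹ := by positivity
  have hp := mix_pos hw hw1 v t (x + t • v i)
  set R := 2 * cnormSq x + 2 * t ^ 2 * diam v with hR
  have hR0 : 0 ≤ R := by
    have := cnormSq_nonneg x
    have := diam_nonneg v
    positivity
  have hlow : (Real.pi ^ n)⁻¹ * Real.exp (-R) ≤ mix w v t (x + t • v i) := by
    rw [← one_mul (_ * _), ← hw1, Finset.sum_mul]
    refine Finset.sum_le_sum fun j _ => mul_le_mul_of_nonneg_left ?_ (hw j)
    rw [shift_eq, gauss]
    gcongr
    refine (cnormSq_add_smul_le _ _ _).trans ?_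
    rw [hR]
    gcongr
    exact cnormSq_sub_le_diam v i j
  have hup : mix w v t (x + t • v i) ≤ (Real.pi ^ n)⁻¹ := by
    rw [← one_mul (_)⁻¹, ← hw1, Finset.sum_mul]
    refine Finset.sum_le_sum fun j _ => mul_le_mul_of_nonneg_left ?_ (hw j)
    exact mul_le_of_le_one_right hpi.le
      (Real.exp_le_one_iff.mpr (neg_nonpos.mpr (cnormSq_nonneg _)))
  have h1 := Real.log_le_log (by positivity) hlow
  have h2 := Real.log_le_log hp hup
  rw [Real.log_mul hpi.ne' (Real.exp_ne_zero _), Real.log_exp] at h1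
  have h3 := neg_abs_le (Real.log ((Real.pi ^ n)⁻¹))
  have h4 := le_abs_self (Real.log ((Real.pi ^ n)⁻¹))
  rw [abs_le]
  constructor <;> linarith

lemma integrable_gauss_mul_log_mix {w : Fin k → ℝ} (hw : ∀ i, 0 ≤ w i) (hw1 : ∑ i, w i = 1)
    (v : Fin k → Fin n → ℂ) (t : ℝ) (i : Fin k) :
    Integrable fun x => gauss x * Real.log (mix w v t (x + t • v i)) :=
  integrable_gauss_mul (Continuous.log (by fun_prop) fun _ => (mix_pos hw hw1 v t _).ne') 2 _
    (by norm_num) (by have := diam_nonneg v; positivity) (abs_log_mix_le hw hw1 v t i)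

lemma hasDerivAt_gauss_line (x d : Fin n → ℂ) (t : ℝ) :
    HasDerivAt (fun t : ℝ => gauss (x + t • d))
      (gauss (x + t • d) * (-(2 * cdot (x + t • d) d))) t := by
  have h : HasDerivAt (fun t : ℝ => cnormSq (x + t • d)) (2 * cdot (x + t • d) d) t := by
    simp only [cnormSq_add_smul]
    rw [cdot_add_smul_self]
    have := (((hasDerivAt_id t).const_mul 2).mul_const (cdot x d)).const_add (cnormSq x)|>.add
      ((hasDerivAt_pow 2 t).mul_const (cnormSq d))
    refine this.congr_deriv ?_
    simp
    ring
  refine (h.fun_neg.exp.const_mul _).congr_deriv ?_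
  rw [gauss]
  ring

/-- The function with `-2 * score w v i t (x + t • v i) = ∂/∂t log (mix w v t (x + t • v i))`: the
posterior mean over `j` of `Re ⟨y - t vⱼ, vᵢ - vⱼ⟩` given the output `y`. -/
def score (w : Fin k → ℝ) (v : Fin k → Fin n → ℂ) (i : Fin k) (t : ℝ) (y : Fin n → ℂ) : ℝ :=
  ∑ j, w j * gauss (y - t • v j) * cdot (y - t • v j) (v i - v j) / mix w v t y

lemma hasDerivAt_log_mix {w : Fin k → ℝ} (hw : ∀ i, 0 ≤ w i) (hw1 : ∑ i, w i = 1)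
    (v : Fin k → Fin n → ℂ) (t : ℝ) (i : Fin k) (x : Fin n → ℂ) :
    HasDerivAt (fun t : ℝ => Real.log (mix w v t (x + t • v i)))
      (-2 * score w v i t (x + t • v i)) t := by
  have h : HasDerivAt (fun t : ℝ => mix w v t (x + t • v i))
      (∑ j, w j * (gauss (x + t • (v i - v j)) *
        (-(2 * cdot (x + t • (v i - v j)) (v i - v j))))) t := by
    simp only [mix, shift_eq]
    exact HasDerivAt.fun_sum fun j _ => (hasDerivAt_gauss_line x (v i - v j) t).const_mul (w j)
  refine (h.log (mix_pos hw hw1 v t _).ne').congr_deriv ?_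
  rw [score, Finset.sum_div, Finset.mul_sum]
  refine Finset.sum_congr rfl fun j _ => ?_
  rw [shift_eq]
  ring

lemma abs_score_le {w : Fin k → ℝ} (hw : ∀ i, 0 ≤ w i) (hw1 : ∑ i, w i = 1)
    (v : Fin k → Fin n → ℂ) (t : ℝ) (i : Fin k) (x : Fin n → ℂ) :
    |-2 * score w v i t (x + t • v i)| ≤ 2 * cnormSq x + (2 * t ^ 2 + 1) * diam v := by
  have hp := mix_pos hw hw1 v t (x + t • v i)
  -- The posterior weights sum to one, so it suffices to bound each term of the average.
  set K := 2 * cnormSq x + (2 * t ^ 2 + 1) * diam v with hK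
  have hsum : K = ∑ j, K * (w j * gauss (x + t • v i - t • v j) / mix w v t (x + t • v i)) := by
    rw [← Finset.mul_sum, ← Finset.sum_div]
    exact (mul_one K).symm.trans (congrArg (K * ·) (div_self hp.ne').symm)
  rw [hsum, score, Finset.mul_sum]
  refine (Finset.abs_sum_le_sum_abs _ _).trans ?_
  refine Finset.sum_le_sum fun j _ => ?_
  rw [shift_eq]
  set c := w j * gauss (x + t • (v i - v j)) / mix w v t (x + t • v i) with hc
  have hc0 : 0 ≤ c := div_nonneg (mul_nonneg (hw j) (gauss_pos _).le) hp.le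
  have : -2 * (w j * gauss (x + t • (v i - v j)) * cdot (x + t • (v i - v j)) (v i - v j) /
      mix w v t (x + t • v i)) = -(2 * cdot (x + t • (v i - v j)) (v i - v j)) * c := by
    rw [hc]; ring
  rw [this, abs_mul, abs_neg, abs_of_nonneg hc0]
  gcongr
  have h1 := abs_two_cdot_le (x + t • (v i - v j)) (v i - v j)
  have h2 := cnormSq_add_smul_le x (v i - v j) t
  have h3 := cnormSq_sub_le_diam v i j
  have h4 := mul_le_mul_of_nonneg_left h3 (by positivity : 0 ≤ 2 * t ^ 2 + 1)
  linarith

lemma continuous_score {w : Fin k → ℝ} (hw : ∀ i, 0 ≤ w i) (hw1 : ∑ i, w i = 1)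
    (v : Fin k → Fin n → ℂ) (t : ℝ) (i : Fin k) : Continuous (score w v i t) := by
  unfold score
  refine continuous_finsetSum _ fun j _ => Continuous.div ?_ (by fun_prop)
    fun _ => (mix_pos hw hw1 v t _).ne'
  exact Continuous.mul (by fun_prop) ((continuous_cdot_left _).comp (by fun_prop))

lemma integrable_gauss_mul_score {w : Fin k → ℝ} (hw : ∀ i, 0 ≤ w i) (hw1 : ∑ i, w i = 1)
    (v : Fin k → Fin n → ℂ) (t : ℝ) (i : Fin k) :
    Integrable fun x => gauss x * (-2 * score w v i t (x + t • v i)) :=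
  integrable_gauss_mul
    (((continuous_score hw hw1 v t i).comp (by fun_prop)).const_mul (-2)) 2 _
    (by norm_num) (by have := diam_nonneg v; positivity) (abs_score_le hw hw1 v t i)

lemma hasDerivAt_integral_log_mix {w : Fin k → ℝ} (hw : ∀ i, 0 ≤ w i) (hw1 : ∑ i, w i = 1)
    (v : Fin k → Fin n → ℂ) (t : ℝ) (i : Fin k) :
    HasDerivAt (fun t : ℝ => ∫ x, gauss x * Real.log (mix w v t (x + t • v i)))
      (∫ x, gauss x * (-2 * score w v i t (x + t • v i))) t := by
  have hD := diam_nonneg v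
  refine (hasDerivAt_integral_of_dominated_loc_of_deriv_le (Metric.ball_mem_nhds t one_pos)
    (bound := fun x => gauss x * (2 * cnormSq x + (2 * (|t| + 1) ^ 2 + 1) * diam v))
    (Eventually.of_forall fun s =>
      (integrable_gauss_mul_log_mix hw hw1 v s i).aestronglyMeasurable)
    (integrable_gauss_mul_log_mix hw hw1 v t i)
    (integrable_gauss_mul_score hw hw1 v t i).aestronglyMeasurable
    (ae_of_all _ fun x s hs => ?_) ?_
    (ae_of_all _ fun x s _ => (hasDerivAt_log_mix hw hw1 v s i x).const_mul (gauss x))).2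
  · rw [Real.norm_eq_abs, abs_mul, abs_of_pos (gauss_pos x)]
    refine mul_le_mul_of_nonneg_left ((abs_score_le hw hw1 v s i x).trans ?_) (gauss_pos x).le
    have hst : s ^ 2 ≤ (|t| + 1) ^ 2 := by
      rw [← sq_abs s]
      have h1 : |s - t| < 1 := by simpa [Real.dist_eq] using hs
      have h2 := abs_sub_abs_le_abs_sub s t
      exact pow_le_pow_left₀ (abs_nonneg s) (by linarith) 2
    gcongr
  · refine integrable_gauss_mul (by fun_prop) 2 ((2 * (|t| + 1) ^ 2 + 1) * diam v) (by norm_num)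
      (by positivity) fun x => ?_
    rw [abs_of_nonneg]
    have := cnormSq_nonneg x
    positivity

/-- Translation invariance: passing from the noise `x` to the output `y = x + c`. -/
lemma integral_shift (f : (Fin n → ℂ) → ℝ) (c : Fin n → ℂ) :
    ∫ x, gauss x * f (x + c) = ∫ y, gauss (y - c) * f y := by
  rw [← integral_sub_right_eq_self (fun x => gauss x * f (x + c)) c]
  simp

lemma integrable_shift {f : (Fin n → ℂ) → ℝ} {c : Fin n → ℂ}
    (h : Integrable fun x => gauss x * f (x + c)) : Integrable fun y => gauss (y - c) * f y := by
  simpa using h.comp_sub_right c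

/-- Conditioning on the input atom and centring the noise moves all dependence on `t` into the
logarithm, while the Gaussian weight stays fixed. -/
lemma integral_mix_log {w : Fin k → ℝ} (hw : ∀ i, 0 ≤ w i) (hw1 : ∑ i, w i = 1)
    (v : Fin k → Fin n → ℂ) (t : ℝ) :
    ∫ y, mix w v t y * Real.log (mix w v t y) =
      ∑ i, w i * ∫ x, gauss x * Real.log (mix w v t (x + t • v i)) := by
  simp only [integral_shift (fun y => Real.log (mix w v t y))]
  simp only [← integral_const_mul]
  rw [← integral_finsetSum _ fun i _ =>
    (integrable_shift (integrable_gauss_mul_log_mix hw hw1 v t i)).const_mul (w i)]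
  congr 1 with y
  conv_lhs => enter [1]; rw [mix]
  rw [Finset.sum_mul]
  exact Finset.sum_congr rfl fun i _ => mul_assoc _ _ _

/-- The density of the output at `y` times the conditional variance of the centre given `y`, the
conditional mean being `(mix w v t y)⁻¹ • ∑ j, (w j * gauss (y - t • v j)) • v j`. -/
def condVar (w : Fin k → ℝ) (v : Fin k → Fin n → ℂ) (t : ℝ) (y : Fin n → ℂ) : ℝ :=
  ∑ i, w i * gauss (y - t • v i) *
    cnormSq (v i - (mix w v t y)⁻¹ • ∑ j, (w j * gauss (y - t • v j)) • v j)

lemma hasDerivAt_integral_mix_log {w : Fin k → ℝ} (hw : ∀ i, 0 ≤ w i) (hw1 : ∑ i, w i = 1)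
    (v : Fin k → Fin n → ℂ) (t : ℝ) :
    HasDerivAt (fun t => ∫ y, mix w v t y * Real.log (mix w v t y))
      (-2 * t * ∫ y, condVar w v t y) t := by
  simp only [integral_mix_log hw hw1]
  refine (HasDerivAt.fun_sum fun i _ =>
    (hasDerivAt_integral_log_mix hw hw1 v t i).const_mul (w i)).congr_deriv ?_
  have hsh : ∀ i, ∫ x, gauss x * (-2 * score w v i t (x + t • v i)) =
      ∫ y, gauss (y - t • v i) * (-2 * score w v i t y) :=
    fun i => integral_shift (fun y => -2 * score w v i t y) (t • v i)
  simp only [hsh]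
  simp only [← integral_const_mul]
  rw [← integral_finsetSum _ fun i _ => (integrable_shift (f := fun y => -2 * score w v i t y)
    (integrable_gauss_mul_score hw hw1 v t i)).const_mul (w i)]
  congr 1 with y
  have := weighted_variance (fun i => w i * gauss (y - t • v i)) v y t
    (mix_pos hw hw1 v t y).ne'
  rw [mul_assoc, condVar]
  simp only [mix, score] at this ⊢
  rw [← this, Finset.mul_sum]
  exact Finset.sum_congr rfl fun i _ => by ring

end Mixture


/-! ### The channel and its MMSE matrix -/

section Trace

variable {nr nt k : ℕ}

/-- The noiseless channel output `H P aᵢ` at unit gain for the `i`-th input atom. -/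
def vhp (S : SU nr nt k) (i : Fin k) : Fin nr → ℂ := (S.H * S.P).mulVec (S.a i)

lemma pcond_eq (S : SU nr nt k) (snr : ℝ) (i : Fin k) (y : Fin nr → ℂ) :
    S.pcond snr i y = gauss (y - Real.sqrt snr • S.vhp i) := rfl

lemma pout_eq (S : SU nr nt k) (snr : ℝ) (y : Fin nr → ℂ) :
    S.pout snr y = mix S.w S.vhp (Real.sqrt snr) y := rfl

lemma pout_pos (S : SU nr nt k) (snr : ℝ) (y : Fin nr → ℂ) : 0 < S.pout snr y :=
  mix_pos S.w_nonneg S.w_sum _ _ _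

@[fun_prop]
lemma continuous_pcond (S : SU nr nt k) (snr : ℝ) (i : Fin k) : Continuous (S.pcond snr i) := by
  simp only [funext (pcond_eq S snr i)]
  fun_prop

lemma continuous_xhat (S : SU nr nt k) (snr : ℝ) : Continuous (S.xhat snr) := by
  have h : Continuous (S.pout snr) := continuous_mix _ _ _
  unfold xhat
  exact (h.inv₀ fun y => (pout_pos S snr y).ne').smul (by fun_prop)

lemma norm_xhat_le (S : SU nr nt k) (snr : ℝ) (y : Fin nr → ℂ) (p : Fin nt) :
    ‖S.xhat snr y p‖ ≤ ∑ j, ‖S.a j p‖ := by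
  have hp := pout_pos S snr y
  have hq : ∀ j, 0 ≤ S.w j * S.pcond snr j y := fun j =>
    mul_nonneg (S.w_nonneg j) (gauss_pos _).le
  simp only [xhat, Pi.smul_apply, Finset.sum_apply]
  rw [norm_smul, norm_inv, Real.norm_of_nonneg hp.le, inv_mul_le_iff₀ hp, Finset.mul_sum]
  refine (norm_sum_le _ _).trans (Finset.sum_le_sum fun j _ => ?_)
  rw [norm_smul, Real.norm_of_nonneg (hq j)]
  gcongr
  exact Finset.single_le_sum (f := fun j => S.w j * S.pcond snr j y) (fun j _ => hq j)
    (Finset.mem_univ j)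

lemma integrable_Emat_integrand (S : SU nr nt k) (snr : ℝ) (i : Fin k) (p q : Fin nt) :
    Integrable fun y : Fin nr → ℂ => (S.w i * S.pcond snr i y) •
      ((S.a i p - S.xhat snr y p) * (starRingEnd ℂ) (S.a i q - S.xhat snr y q)) := by
  have hg : Integrable fun y => S.w i * S.pcond snr i y :=
    (integrable_gauss.comp_sub_right (Real.sqrt snr • S.vhp i)).const_mul (S.w i)
  have hx := continuous_xhat S snr
  have hb : ∀ p y, ‖S.a i p - S.xhat snr y p‖ ≤ ‖S.a i p‖ + ∑ j, ‖S.a j p‖ := fun p y =>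
    (norm_sub_le _ _).trans (by gcongr; exact norm_xhat_le S snr y p)
  refine Integrable.smul_bdd hg
    ((‖S.a i p‖ + ∑ j, ‖S.a j p‖) * (‖S.a i q‖ + ∑ j, ‖S.a j q‖)) ?_
    (ae_of_all _ fun y => ?_)
  · exact Continuous.aestronglyMeasurable (by fun_prop)
  · rw [norm_mul, RCLike.norm_conj]
    exact mul_le_mul (hb p y) (hb q y) (norm_nonneg _) (by positivity)

/-- By linearity `H P x̂(y)` is the conditional mean of `H P x`, as it appears in `condVar`. -/
lemma mulVec_xhat (S : SU nr nt k) (snr : ℝ) (y : Fin nr → ℂ) :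
    (S.H * S.P).mulVec (S.xhat snr y) = (mix S.w S.vhp (Real.sqrt snr) y)⁻¹ •
      ∑ j, (S.w j * gauss (y - Real.sqrt snr • S.vhp j)) • S.vhp j := by
  simp only [xhat, mulVec_smul, mulVec_sum, pout_eq, pcond_eq]
  rfl

lemma ofReal_cnormSq_mulVec {m n : ℕ} (A : Matrix (Fin m) (Fin n) ℂ) (u : Fin n → ℂ) :
    (cnormSq (A.mulVec u) : ℂ) =
      ∑ r, ∑ q, (∑ p, A r p * (u p * (starRingEnd ℂ) (u q))) * (starRingEnd ℂ) (A r q) := by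
  rw [cnormSq, Complex.ofReal_sum]
  refine Finset.sum_congr rfl fun r _ => ?_
  rw [← Complex.mul_conj, mulVec, dotProduct, map_sum, Finset.sum_mul_sum, Finset.sum_comm]
  refine Finset.sum_congr rfl fun q _ => ?_
  rw [Finset.sum_mul]
  refine Finset.sum_congr rfl fun p _ => ?_
  rw [map_mul]
  ring

/-- `Tr(H P E (H P)†)` is the mean squared error `E ‖H P (x - x̂(y))‖²`. The entries of the matrix
integrand are bounded multiples of Gaussians, so the trace can be taken under the integral. -/
lemma trace_eq_integral_condVar (S : SU nr nt k) (snr : ℝ) :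
    (S.H * S.P * S.Emat snr * (S.H * S.P)ᴴ).trace =
      ((∫ y, condVar S.w S.vhp (Real.sqrt snr) y : ℝ) : ℂ) := by
  set A := S.H * S.P with hA
  have hpt : ∀ y, (condVar S.w S.vhp (Real.sqrt snr) y : ℂ) =
      ∑ r, ∑ q, (∑ p, A r p * ∑ i, (S.w i * S.pcond snr i y) •
        ((S.a i p - S.xhat snr y p) * (starRingEnd ℂ) (S.a i q - S.xhat snr y q))) *
          (starRingEnd ℂ) (A r q) := by
    intro y
    rw [condVar, ← mulVec_xhat]
    simp only [vhp, ← mulVec_sub, Complex.ofReal_sum, Complex.ofReal_mul (_ * _) (cnormSq _),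
      ofReal_cnormSq_mulVec, Finset.mul_sum, Finset.sum_mul]
    rw [Finset.sum_comm]
    refine Finset.sum_congr rfl fun r _ => ?_
    rw [Finset.sum_comm]
    refine Finset.sum_congr rfl fun q _ => ?_
    rw [Finset.sum_comm]
    refine Finset.sum_congr rfl fun p _ => Finset.sum_congr rfl fun i _ => ?_
    rw [Complex.real_smul, pcond_eq, vhp, Pi.sub_apply, Pi.sub_apply]
    ring
  have hi := integrable_Emat_integrand S snr
  have hi1 : ∀ p q, Integrable fun y => ∑ i, (S.w i * S.pcond snr i y) •
        ((S.a i p - S.xhat snr y p) * (starRingEnd ℂ) (S.a i q - S.xhat snr y q)) :=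
    fun p q => integrable_finsetSum _ fun i _ => hi i p q
  have hi2 : ∀ r q, Integrable fun y => (∑ p, A r p * ∑ i, (S.w i * S.pcond snr i y) •
        ((S.a i p - S.xhat snr y p) * (starRingEnd ℂ) (S.a i q - S.xhat snr y q))) *
          (starRingEnd ℂ) (A r q) :=
    fun r q => (integrable_finsetSum _ fun p _ => (hi1 p q).const_mul _).mul_const _
  rw [← integral_complex_ofReal]
  simp only [hpt]
  rw [integral_finsetSum _ fun r _ => integrable_finsetSum _ fun q _ => hi2 r q, trace]
  refine Finset.sum_congr rfl fun r _ => ?_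
  rw [integral_finsetSum _ fun q _ => hi2 r q, diag_apply, mul_apply]
  refine Finset.sum_congr rfl fun q _ => ?_
  rw [integral_mul_const, integral_finsetSum _ fun p _ => (hi1 p q).const_mul _, mul_apply,
    conjTranspose_apply]
  congr 1
  refine Finset.sum_congr rfl fun p _ => ?_
  rw [integral_const_mul, integral_finsetSum _ fun i _ => hi i p q, Emat, of_apply]

lemma hasDerivAt_MI (S : SU nr nt k) {snr : ℝ} (h : 0 < snr) :
    HasDerivAt S.MI (∫ y, condVar S.w S.vhp (Real.sqrt snr) y) snr := by
  have h1 := (hasDerivAt_integral_mix_log S.w_nonneg S.w_sum S.vhp (Real.sqrt snr)).comp snr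
    (Real.hasDerivAt_sqrt h.ne')
  refine (h1.const_sub (-((nr : ℝ) * Real.log (Real.pi * Real.exp 1)))).congr_deriv ?_
  have := (Real.sqrt_pos.mpr h).ne'
  field_simp

end Trace

end SU

/-- **Single-user vector I-MMSE relation** (recovered from Theorem 1 when the
interference term vanishes): for `y = √snr·H·P·x + n` with a finite-support
input `x`, the mutual information is differentiable on `(0, ∞)` and
`dI(snr)/dsnr = Tr(H·P·E·(H·P)†)` where `E` is the MMSE matrix of `x` given
`y`. -/
theorem SU.deriv_MI_eq_mmse (nr nt k : ℕ) (S : SU nr nt k) :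
    ∀ snr : ℝ, 0 < snr →
      DifferentiableAt ℝ S.MI snr ∧
      Complex.ofReal (deriv S.MI snr) =
        (S.H * S.P * S.Emat snr * (S.H * S.P)ᴴ).trace := by
  intro snr h
  have hd := SU.hasDerivAt_MI S h
  exact ⟨hd.differentiableAt, by rw [hd.deriv, SU.trace_eq_integral_condVar]⟩
end
end
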